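/- Let X₁ and X₂ be topological spaces and let U be an open subset of X₁ × X₂ (with the product topology). Then the set {(F₁, F₂) ∈ F(X₁) × F(X₂) : (F₁ × F₂) ∩ U ≠ ∅} is open in F(X₁) × F(X₂), where each hyperspace of closed sets carries the lower Vietoris topology and F(X₁) × F(X₂) carries the product topology. -/

import Mathlib

open Topology

/-- The lower Vietoris topology on the hyperspace of closed subsets of `X`:
generated by the subbasis of sets `{F | F ∩ O ≠ ∅}` for `O` open in `X`. -/
def lowerVietoris (X : Type*) [TopologicalSpace X] :
    TopologicalSpace {F : Set X // IsClosed F} :=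
  TopologicalSpace.generateFrom
    {S | ∃ O : Set X, IsOpen O ∧ S = {F : {F : Set X // IsClosed F} | (F.1 ∩ O).Nonempty}}

/-- For an open subset `U` of `X₁ × X₂`, the set
`{(F₁, F₂) ∈ F(X₁) × F(X₂) : (F₁ × F₂) ∩ U ≠ ∅}` is open in `F(X₁) × F(X₂)`,
where each hyperspace of closed sets carries the lower Vietoris topology and the
product carries the product topology. -/
theorem isOpen_pairs_prod_meets {X₁ X₂ : Type*} [TopologicalSpace X₁] [TopologicalSpace X₂]
    (U : Set (X₁ × X₂)) (hU : IsOpen U) :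
    IsOpen[@instTopologicalSpaceProd _ _ (lowerVietoris X₁) (lowerVietoris X₂)]
      {p : {F : Set X₁ // IsClosed F} × {F : Set X₂ // IsClosed F} |
        ((p.1.1 ×ˢ p.2.1) ∩ U).Nonempty} := by
  letI := lowerVietoris X₁
  letI := lowerVietoris X₂
  rw [isOpen_iff_forall_mem_open]
  rintro ⟨F₁, F₂⟩ ⟨⟨x, y⟩, ⟨hx, hy⟩, hxy⟩
  -- An open box `O₁ ×ˢ O₂ ⊆ U` around the common point yields the basic open
  -- neighbourhood of pairs `(G₁, G₂)` with `G₁` meeting `O₁` and `G₂` meeting `O₂`.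
  obtain ⟨O₁, O₂, hO₁, hO₂, hxO, hyO, hsub⟩ := isOpen_prod_iff.1 hU x y hxy
  refine ⟨{F | (F.1 ∩ O₁).Nonempty} ×ˢ {F | (F.1 ∩ O₂).Nonempty}, ?_,
    IsOpen.prod (TopologicalSpace.isOpen_generateFrom_of_mem ⟨O₁, hO₁, rfl⟩)
      (TopologicalSpace.isOpen_generateFrom_of_mem ⟨O₂, hO₂, rfl⟩),
    ⟨x, hx, hxO⟩, ⟨y, hy, hyO⟩⟩
  rintro ⟨G₁, G₂⟩ ⟨⟨a, ha, haO⟩, ⟨b, hb, hbO⟩⟩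
  exact ⟨(a, b), ⟨ha, hb⟩, hsub ⟨haO, hbO⟩⟩
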